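/- Let d ≥ 1, D ≥ 3 and e be integers with 1 ≤ e ≤ D and e ∣ D, assume (D−2)(d−1) + D/e ≥ 2, and let A ⊆ ℕ^d be of one-singular-point type for D and e. Set t₀ := (D−2)(d−1) + D/e − 2 and s₀ := (D/e)·t₀. Then the hole set H := ℕ_e^d \ ⟨A⟩ satisfies H ⊆ Δ_{t₀,e}, and sA = Δ_{s,e} \ H for every natural number s ≥ s₀. -/

import Mathlib

open Pointwise

/-- The `s`-fold sumset of `A`: `0A = {0}` and `(s+1)A = A + sA`. -/
def sumset {M : Type*} [AddMonoid M] (A : Set M) : ℕ → Set M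
  | 0 => {0}
  | s + 1 => A + sumset A s

/-- `ℕ_e^d = {y ∈ ℕ^d : e ∣ |y|}`. -/
def NatE (d e : ℕ) : Set (Fin d → ℕ) := {y | e ∣ ∑ j, y j}

/-- `Δ_{s,e} = {y ∈ ℕ_e^d : |y| ≤ sD}`. -/
def DeltaE (d D e s : ℕ) : Set (Fin d → ℕ) := {y | e ∣ ∑ j, y j ∧ ∑ j, y j ≤ s * D}

/-- The hole set `H = ℕ_e^d \ ⟨A⟩`, where `⟨A⟩` is the additive submonoid generated by `A`. -/
def Holes (d e : ℕ) (A : Set (Fin d → ℕ)) : Set (Fin d → ℕ) :=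
  NatE d e \ (AddSubmonoid.closure A : Set (Fin d → ℕ))

/-- The set `{0, Dε₁, …, Dε_d}`. -/
def Erays (d D : ℕ) : Set (Fin d → ℕ) :=
  insert 0 (Set.range fun i : Fin d => Pi.single i D)

/-- `A ⊆ ℕ^d` is of one-singular-point type for `D` and `e`: every `a ∈ A` satisfies
`|a| ≤ D` and `e ∣ |a|`, and `A` contains `0`, the vectors `(D-1)εᵢ + εⱼ` for all `i, j`,
and the vectors `(D-e)εᵢ` for all `i`. -/
def OneSingType (d D e : ℕ) (A : Set (Fin d → ℕ)) : Prop :=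
  (∀ a ∈ A, ∑ j, a j ≤ D ∧ e ∣ ∑ j, a j) ∧
  (0 : Fin d → ℕ) ∈ A ∧
  (∀ i j : Fin d, Pi.single i (D - 1) + Pi.single j 1 ∈ A) ∧
  (∀ i : Fin d, Pi.single i (D - e) ∈ A)

/-!
Let `t₀ = (D - 2)(d - 1) + D / e - 2`, and let `y ∈ ℕ_e^d` satisfy `|y| > t₀ D`. Put
`T = ⌈|y| / D⌉ ≥ t₀ + 1` and `T D - |y| = n e`, so that `n ≤ D / e - 1` and
`T - n ≥ (D - 2)(d - 1)`. Pigeonhole on the coordinates splits off `n` summands `(D - e) εᵢ`,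
leaving a vector of size `(T - n) D`. Pigeonhole again writes that remainder as `(D - 1) u + v` with
`|u| = |v| = T - n`, and pairing the unit vectors of `u` with those of `v` gives `T - n` summands
`(D - 1) εᵢ + εⱼ`. So `y ∈ TA`, and `T` is as small as the size of `y` permits.
If instead `|y| ≤ t₀ D` and `y ∈ ⟨A⟩`, then `y` is a sum of at most `|y| / e ≤ s₀` nonzero elements
of `A`, since each of them has size at least `e`.
-/

theorem sumset_eq_nsmul {M : Type*} [AddMonoid M] (A : Set M) (s : ℕ) : sumset A s = s • A := by
  induction s with
  | zero => rw [sumset, zero_nsmul, Set.singleton_zero]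
  | succ n ih => rw [sumset, ih, succ_nsmul']

theorem add_mem_add_nsmul {M : Type*} [AddMonoid M] {A : Set M} {m n : ℕ} {x y : M}
    (hx : x ∈ m • A) (hy : y ∈ n • A) : x + y ∈ (m + n) • A := by
  rw [add_nsmul]
  exact Set.add_mem_add hx hy

section Fintype

variable {ι : Type*} [Fintype ι]

theorem exists_le_apply_of_le_sum [Nonempty ι] {q : ℕ} {y : ι → ℕ}
    (h : q + (Fintype.card ι - 1) * (q - 1) ≤ ∑ i, y i) : ∃ i, q ≤ y i := by
  by_contra! hlt
  have hq : 0 < q := (Nat.zero_le _).trans_lt (hlt (Classical.arbitrary ι))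
  have hsum : ∑ i, y i ≤ Fintype.card ι * (q - 1) := by
    simpa using
      Finset.sum_le_card_nsmul Finset.univ y (q - 1) fun i _ => Nat.le_sub_one_of_lt (hlt i)
  have hcard : Fintype.card ι * (q - 1) = (Fintype.card ι - 1) * (q - 1) + (q - 1) := by
    rw [← Nat.succ_mul, Nat.succ_eq_add_one, Nat.sub_add_cancel Fintype.card_pos]
  omega

theorem exists_mem_nsmul_of_mem_closure {e : ℕ} {A : Set (ι → ℕ)} (hA : ∀ a ∈ A, e ∣ ∑ i, a i)
    {y : ι → ℕ} (hy : y ∈ AddSubmonoid.closure A) : ∃ n, e * n ≤ ∑ i, y i ∧ y ∈ n • A := by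
  induction hy using AddSubmonoid.closure_induction with
  | mem a ha =>
    obtain rfl | ha0 := eq_or_ne a 0
    · exact ⟨0, by simp, by simp⟩
    · have hpos : 0 < ∑ i, a i := Fintype.sum_pos (pos_of_ne_zero ha0)
      exact ⟨1, by simpa using Nat.le_of_dvd hpos (hA a ha), by simpa using ha⟩
  | zero => exact ⟨0, by simp, by simp⟩
  | add x y _ _ hx hy =>
    obtain ⟨m, hm, hxm⟩ := hx
    obtain ⟨n, hn, hyn⟩ := hy
    refine ⟨m + n, ?_, add_mem_add_nsmul hxm hyn⟩
    simpa only [Pi.add_apply, Finset.sum_add_distrib, mul_add] using add_le_add hm hn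

theorem dvd_sum_and_sum_le_of_mem_nsmul {D e : ℕ} {A : Set (ι → ℕ)}
    (hA : ∀ a ∈ A, ∑ i, a i ≤ D ∧ e ∣ ∑ i, a i) {s : ℕ} {y : ι → ℕ} (hy : y ∈ s • A) :
    e ∣ ∑ i, y i ∧ ∑ i, y i ≤ s * D := by
  induction s generalizing y with
  | zero =>
    obtain rfl : y = 0 := by simpa using hy
    simp
  | succ s ih =>
    rw [succ_nsmul] at hy
    obtain ⟨x, hx, a, ha, rfl⟩ := Set.mem_add.1 hy
    obtain ⟨hx_dvd, hx_le⟩ := ih hx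
    obtain ⟨ha_le, ha_dvd⟩ := hA a ha
    simp only [Pi.add_apply, Finset.sum_add_distrib, add_mul, one_mul]
    exact ⟨dvd_add hx_dvd ha_dvd, add_le_add hx_le ha_le⟩

theorem exists_eq_single_add [DecidableEq ι] {y : ι → ℕ} {i : ι} {q : ℕ} (h : q ≤ y i) :
    ∃ z : ι → ℕ, y = Pi.single i q + z ∧ ∑ j, y j = q + ∑ j, z j := by
  have hle : (Pi.single i q : ι → ℕ) ≤ y := update_le_iff.2 ⟨h, fun _ _ => Nat.zero_le _⟩
  obtain ⟨z, rfl⟩ := exists_add_of_le hle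
  exact ⟨z, rfl, by simp [Finset.sum_add_distrib]⟩

theorem exists_eq_smul_add_of_le_sum [Nonempty ι] {q n : ℕ} {y : ι → ℕ}
    (h : q * n + (Fintype.card ι - 1) * (q - 1) ≤ ∑ i, y i) :
    ∃ w v : ι → ℕ, y = q • w + v ∧ ∑ i, w i = n ∧ ∑ i, y i = q * n + ∑ i, v i := by
  classical
  induction n generalizing y with
  | zero => exact ⟨0, y, by simp, by simp, by simp⟩
  | succ n ih =>
    rw [mul_add_one] at h
    obtain ⟨i, hi⟩ := exists_le_apply_of_le_sum (q := q) (y := y) (by omega)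
    obtain ⟨z, rfl, hz⟩ := exists_eq_single_add hi
    obtain ⟨w, v, rfl, hw, hv⟩ := ih (y := z) (by omega)
    refine ⟨Pi.single i 1 + w, v, ?_, ?_, by rw [hz, hv, mul_add_one]; omega⟩
    · rw [smul_add, ← Pi.single_smul, smul_eq_mul, mul_one, add_assoc]
    · simp [Finset.sum_add_distrib, hw, add_comm]

variable [DecidableEq ι]

theorem exists_eq_single_one_add_of_sum_eq_succ {u : ι → ℕ} {n : ℕ} (h : ∑ i, u i = n + 1) :
    ∃ (i : ι) (z : ι → ℕ), u = Pi.single i 1 + z ∧ ∑ j, z j = n := by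
  obtain ⟨i, hi⟩ : ∃ i, u i ≠ 0 := by
    by_contra! hu
    simp [hu] at h
  obtain ⟨z, hz, hsum⟩ := exists_eq_single_add (Nat.one_le_iff_ne_zero.2 hi)
  exact ⟨i, z, hz, by omega⟩

theorem smul_mem_nsmul_of_single_mem {c : ℕ} {A : Set (ι → ℕ)} (h : ∀ i, Pi.single i c ∈ A)
    (w : ι → ℕ) : c • w ∈ (∑ i, w i) • A := by
  have hw : c • w = ∑ i, w i • (Pi.single i c : ι → ℕ) := by
    ext j
    simp [Finset.sum_apply, Pi.single_apply, mul_comm]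
  rw [hw, ← Finset.sum_nsmul_assoc]
  exact Set.finsetSum_mem_finsetSum _ _ _ fun i _ => Set.nsmul_mem_nsmul (h i)

theorem smul_add_mem_nsmul_of_single_add_single_mem {c n : ℕ} {A : Set (ι → ℕ)}
    (h : ∀ i j, Pi.single i c + Pi.single j 1 ∈ A) {u v : ι → ℕ}
    (hu : ∑ i, u i = n) (hv : ∑ i, v i = n) : c • u + v ∈ n • A := by
  induction n generalizing u v with
  | zero =>
    obtain rfl : u = 0 := by simpa [funext_iff] using hu
    obtain rfl : v = 0 := by simpa [funext_iff] using hv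
    simp
  | succ n ih =>
    obtain ⟨i, u', rfl, hu'⟩ := exists_eq_single_one_add_of_sum_eq_succ hu
    obtain ⟨j, v', rfl, hv'⟩ := exists_eq_single_one_add_of_sum_eq_succ hv
    rw [smul_add, ← Pi.single_smul, smul_eq_mul, mul_one, add_add_add_comm, succ_nsmul']
    exact Set.add_mem_add (h i j) (ih hu' hv')

variable [Nonempty ι] {A : Set (ι → ℕ)}

theorem mem_nsmul_of_sum_eq_mul {c r : ℕ} (h : ∀ i j, Pi.single i c + Pi.single j 1 ∈ A)
    (hr : (c - 1) * (Fintype.card ι - 1) ≤ r) {y : ι → ℕ} (hy : ∑ i, y i = r * (c + 1)) :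
    y ∈ r • A := by
  obtain ⟨u, v, rfl, hu, hsum⟩ := exists_eq_smul_add_of_le_sum (q := c) (n := r) (y := y) (by
    rw [hy, mul_comm (_ - 1), mul_add_one, mul_comm r]
    exact Nat.add_le_add_left hr _)
  exact smul_add_mem_nsmul_of_single_add_single_mem h hu (by linarith)

theorem mem_nsmul_of_sum_add_eq_mul {D e n T : ℕ} (he : 0 < e) (heD : e ≤ D)
    (hpair : ∀ i j, Pi.single i (D - 1) + Pi.single j 1 ∈ A)
    (hsingle : ∀ i, Pi.single i (D - e) ∈ A) (hT : (D - 2) * (Fintype.card ι - 1) + n ≤ T)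
    {y : ι → ℕ} (hy : ∑ i, y i + n * e = T * D) : y ∈ T • A := by
  obtain ⟨r, rfl⟩ := Nat.exists_eq_add_of_le' (le_of_add_le_right hT)
  have hr : (D - 2) * (Fintype.card ι - 1) ≤ r := Nat.le_of_add_le_add_right hT
  have hsum : ∑ i, y i = (D - e) * n + r * D := by
    obtain ⟨q, rfl⟩ := Nat.exists_eq_add_of_le heD
    rw [Nat.add_sub_cancel_left]
    linarith
  have hroom : (Fintype.card ι - 1) * (D - e - 1) ≤ r * D :=
    calc (Fintype.card ι - 1) * (D - e - 1)
        ≤ (D - 2) * (Fintype.card ι - 1) := by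
          rw [mul_comm]
          exact Nat.mul_le_mul_right _ (by omega)
      _ ≤ r := hr
      _ ≤ r * D := Nat.le_mul_of_pos_right r (by omega)
  obtain ⟨w, v, rfl, hw, hwv⟩ := exists_eq_smul_add_of_le_sum (q := D - e) (n := n) (y := y) (by
    rw [hsum]
    exact Nat.add_le_add_left hroom _)
  have hv : ∑ i, v i = r * (D - 1 + 1) := by
    rw [Nat.sub_add_cancel (he.trans_le heD)]
    exact Nat.add_left_cancel (hwv.symm.trans hsum)
  have hwn : (D - e) • w ∈ n • A := hw ▸ smul_mem_nsmul_of_single_mem hsingle w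
  rw [add_comm r]
  exact add_mem_add_nsmul hwn (mem_nsmul_of_sum_eq_mul hpair hr hv)

end Fintype

theorem exists_add_mul_eq_mul {D e N s t : ℕ} (hD : 0 < D) (heD : e ∣ D) (heN : e ∣ N)
    (ht : t * D < N) (hs : N ≤ s * D) :
    ∃ T n, t < T ∧ T ≤ s ∧ n < D / e ∧ N + n * e = T * D := by
  have hT : N ≤ D * (N ⌈/⌉ D) := le_smul_ceilDiv hD
  have htT : t < N ⌈/⌉ D := by
    by_contra! hle
    rw [ceilDiv_le_iff_le_mul hD, mul_comm] at hle
    omega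
  have hlt : D * (N ⌈/⌉ D) < N + D := by
    have hdiv := Nat.mul_div_le (N + D - 1) D
    rw [Nat.ceilDiv_eq_add_pred_div]
    omega
  obtain ⟨n, hn⟩ : e ∣ D * (N ⌈/⌉ D) - N := Nat.dvd_sub (heD.mul_right _) heN
  refine ⟨N ⌈/⌉ D, n, htT, (ceilDiv_le_iff_le_mul hD).2 (by rwa [mul_comm]), ?_, ?_⟩
  · rw [Nat.lt_div_iff_mul_lt_of_dvd (Nat.pos_of_dvd_of_pos heD hD).ne' heD, mul_comm]
    omega
  · rw [mul_comm n, mul_comm _ D]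
    omega

namespace OneSingType

/- In the hypotheses `ht` below, `(D - 2) * (d - 1) + D / e ≤ t + 2` says `t₀ ≤ t` without a
truncated subtraction: `t₀ = (D - 2)(d - 1) + D / e - 2` can be `-1`. -/

variable {d D e t s : ℕ} {A : Set (Fin d → ℕ)}

theorem sumset_subset_deltaE_diff_holes (hA : OneSingType d D e A) :
    sumset A s ⊆ DeltaE d D e s \ Holes d e A := by
  intro y hy
  rw [sumset_eq_nsmul] at hy
  exact ⟨dvd_sum_and_sum_le_of_mem_nsmul hA.1 hy,
    fun hole => hole.2 (AddSubmonoid.nsmul_subset AddSubmonoid.subset_closure hy)⟩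

theorem mem_sumset_of_mul_lt_sum (hA : OneSingType d D e A) (hd : 0 < d) (hD : 0 < D) (heD : e ∣ D)
    (ht : (D - 2) * (d - 1) + D / e ≤ t + 2) {y : Fin d → ℕ} (hy : y ∈ DeltaE d D e s)
    (hty : t * D < ∑ i, y i) : y ∈ sumset A s := by
  obtain ⟨-, zero_mem, hpair, hsingle⟩ := hA
  obtain ⟨T, n, htT, hTs, hn, hsum⟩ := exists_add_mul_eq_mul hD heD hy.1 hty hy.2
  have : Nonempty (Fin d) := ⟨⟨0, hd⟩⟩
  have hyT : y ∈ T • A :=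
    mem_nsmul_of_sum_add_eq_mul (Nat.pos_of_dvd_of_pos heD hD) (Nat.le_of_dvd hD heD) hpair hsingle
      (by rw [Fintype.card_fin]; omega) hsum
  rw [sumset_eq_nsmul]
  exact Set.nsmul_subset_nsmul_right zero_mem hTs hyT

theorem mem_sumset_of_sum_le_mul (hA : OneSingType d D e A) (hD : 0 < D) (heD : e ∣ D)
    (hs : D / e * t ≤ s) {y : Fin d → ℕ} (hy : y ∈ AddSubmonoid.closure A)
    (hyt : ∑ i, y i ≤ t * D) : y ∈ sumset A s := by
  obtain ⟨n, hn, hyn⟩ := exists_mem_nsmul_of_mem_closure (fun a ha => (hA.1 a ha).2) hy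
  have hnt : n ≤ D / e * t := by
    refine le_of_mul_le_mul_left ?_ (Nat.pos_of_dvd_of_pos heD hD)
    calc e * n ≤ t * D := hn.trans hyt
      _ = e * (D / e * t) := by rw [← mul_assoc, Nat.mul_div_cancel' heD, mul_comm]
  rw [sumset_eq_nsmul]
  exact Set.nsmul_subset_nsmul_right hA.2.1 (hnt.trans hs) hyn

theorem holes_subset_deltaE (hA : OneSingType d D e A) (hd : 0 < d) (hD : 0 < D) (heD : e ∣ D)
    (ht : (D - 2) * (d - 1) + D / e ≤ t + 2) : Holes d e A ⊆ DeltaE d D e t := by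
  intro y hole
  refine ⟨hole.1, ?_⟩
  by_contra! hlt
  have hy : y ∈ DeltaE d D e (∑ i, y i) := ⟨hole.1, Nat.le_mul_of_pos_right _ hD⟩
  have hmem := hA.mem_sumset_of_mul_lt_sum hd hD heD ht hy hlt
  exact (hA.sumset_subset_deltaE_diff_holes hmem).2 hole

theorem sumset_eq_deltaE_diff_holes (hA : OneSingType d D e A) (hd : 0 < d) (hD : 0 < D)
    (heD : e ∣ D) (ht : (D - 2) * (d - 1) + D / e ≤ t + 2) (hs : D / e * t ≤ s) :
    sumset A s = DeltaE d D e s \ Holes d e A := by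
  refine hA.sumset_subset_deltaE_diff_holes.antisymm fun y ⟨hy, not_hole⟩ => ?_
  have hcl : y ∈ AddSubmonoid.closure A := by_contra fun h => not_hole ⟨hy.1, h⟩
  obtain hty | hyt := lt_or_ge (t * D) (∑ i, y i)
  · exact hA.mem_sumset_of_mul_lt_sum hd hD heD ht hy hty
  · exact hA.mem_sumset_of_sum_le_mul hD heD hs hcl hyt

end OneSingType

theorem stmt_9 (d D e : ℕ) (hd : 1 ≤ d) (hD : 3 ≤ D) (he : 1 ≤ e) (heD : e ≤ D)
    (hdvd : e ∣ D) (ht : 2 ≤ (D - 2) * (d - 1) + D / e)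
    (A : Set (Fin d → ℕ)) (hA : OneSingType d D e A) :
    Holes d e A ⊆ DeltaE d D e ((D - 2) * (d - 1) + D / e - 2) ∧
    ∀ s : ℕ, (D / e) * ((D - 2) * (d - 1) + D / e - 2) ≤ s →
      sumset A s = DeltaE d D e s \ Holes d e A := by
  have hD_pos : 0 < D := by omega
  have ht_le := (Nat.sub_add_cancel ht).ge
  exact ⟨hA.holes_subset_deltaE hd hD_pos hdvd ht_le,
    fun _ hs => hA.sumset_eq_deltaE_diff_holes hd hD_pos hdvd ht_le hs⟩
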